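/- arXiv:2204.11791 — 2 statements merged into one kernel-verified Lean document; each statement's English description precedes it below -/
import Mathlib

section
/- Assume k ≥ 2 and km is even. Then for every integer n with k ≤ n ≤ km/2 there exists a nondegenerate [n,k]_{q^m/q} code that is (k−1)-MRD, i.e., satisfies d_{k−1}(C) = n − 1. -/
open Module Submodule

noncomputable section

variable (Fq Fqm : Type) [Field Fq] [Field Fqm] [Algebra Fq Fqm]

/-- Rank weight of a vector in `Fqm^n`: the `Fq`-dimension of the span of its entries. -/
def rankWeight {n : ℕ} (v : Fin n → Fqm) : ℕ :=
  finrank Fq (span Fq (Set.range v))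

/-- Minimum rank distance of a code. -/
def minRankDist {n : ℕ} (C : Submodule Fqm (Fin n → Fqm)) : ℕ :=
  sInf {w : ℕ | ∃ v ∈ C, v ≠ 0 ∧ rankWeight Fq Fqm v = w}

/-- Dual code with respect to the standard bilinear form. -/
def dualCode {n : ℕ} (C : Submodule Fqm (Fin n → Fqm)) : Submodule Fqm (Fin n → Fqm) where
  carrier := {v | ∀ c ∈ C, ∑ i, c i * v i = 0}
  add_mem' := by
    intro a b ha hb c hc
    simp only [Set.mem_setOf_eq] at ha hb
    simp only [Pi.add_apply, mul_add, Finset.sum_add_distrib, ha c hc, hb c hc, add_zero]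
  zero_mem' := by
    intro c hc
    simp
  smul_mem' := by
    intro t a ha c hc
    simp only [Set.mem_setOf_eq] at ha
    have key : (∑ i, c i * (t • a) i) = t * ∑ i, c i * a i := by
      rw [Finset.mul_sum]
      refine Finset.sum_congr rfl fun i _ => ?_
      simp only [Pi.smul_apply, smul_eq_mul]
      ring
    simp only [Set.mem_setOf_eq, key, ha c hc, mul_zero]

/-- An `Fqm`-subspace of `Fqm^n` is Galois closed if it is stable under the componentwise
action of every element of `Gal(Fqm/Fq)`. -/
def GaloisClosed {n : ℕ} (A : Submodule Fqm (Fin n → Fqm)) : Prop :=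
  ∀ θ : Fqm ≃ₐ[Fq] Fqm, ∀ v ∈ A, (fun i => θ (v i)) ∈ A

/-- The `s`-th generalized rank weight of a code `C`. -/
def grw {n : ℕ} (C : Submodule Fqm (Fin n → Fqm)) (s : ℕ) : ℕ :=
  sInf {x : ℕ | ∃ A : Submodule Fqm (Fin n → Fqm),
    GaloisClosed Fq Fqm A ∧ s ≤ finrank Fqm ↥(A ⊓ C) ∧ finrank Fqm ↥A = x}

/-- `G` (given as the tuple of its rows) is a generator matrix for `C`. -/
def IsGenMatrix {n k : ℕ} (C : Submodule Fqm (Fin n → Fqm)) (G : Fin k → Fin n → Fqm) : Prop :=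
  C = span Fqm (Set.range G)

/-- A code is nondegenerate if the `Fq`-span of the columns of a generator matrix has
`Fq`-dimension `n`. -/
def IsNondegenerate {n : ℕ} (k : ℕ) (C : Submodule Fqm (Fin n → Fqm)) : Prop :=
  ∃ G : Fin k → Fin n → Fqm, IsGenMatrix Fqm C G ∧
    finrank Fq ↥(span Fq (Set.range fun j : Fin n => fun i : Fin k => G i j)) = n

/-- `U` is a system associated to the code `C`: `U` is the `Fq`-span of the columns of some
generator matrix of `C`. -/
def IsAssociatedSystem {n k : ℕ} (C : Submodule Fqm (Fin n → Fqm))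
    (U : Submodule Fq (Fin k → Fqm)) : Prop :=
  ∃ G : Fin k → Fin n → Fqm, IsGenMatrix Fqm C G ∧
    U = span Fq (Set.range fun j : Fin n => fun i : Fin k => G i j)

/-- `U` is an `[n,k]` system: an `n`-dimensional `Fq`-subspace of `Fqm^k` whose
`Fqm`-span is everything. -/
def IsSystem {k : ℕ} (n : ℕ) (U : Submodule Fq (Fin k → Fqm)) : Prop :=
  finrank Fq ↥U = n ∧ span Fqm (U : Set (Fin k → Fqm)) = ⊤

/-- `U` is `(h,r)`-evasive: every `h`-dimensional `Fqm`-subspace meets `U` in `Fq`-dimension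
at most `r`. -/
def IsEvasive {k : ℕ} (U : Submodule Fq (Fin k → Fqm)) (h r : ℕ) : Prop :=
  ∀ W : Submodule Fqm (Fin k → Fqm), finrank Fqm ↥W = h →
    finrank Fq ↥(U ⊓ W.restrictScalars Fq) ≤ r

/-- A `k`-dimensional code `C ⊆ Fqm^n` is near MRD if `d₁(C) = n-k` and `dₛ(C) = n-k+s`
for all `2 ≤ s ≤ k`. -/
def IsNearMRD {n : ℕ} (k : ℕ) (C : Submodule Fqm (Fin n → Fqm)) : Prop :=
  grw Fq Fqm C 1 = n - k ∧ ∀ s : ℕ, 2 ≤ s → s ≤ k → grw Fq Fqm C s = n - k + s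

/-!
A code with associated system `U ⊆ Fqm^k` has `d_{k-1}(C) = n - 1` as soon as `U` is scattered: a
Galois closed `A` meeting the code in dimension at least `k - 1` has a Galois closed dual, which is
spanned by vectors over `Fq`; the columns of the generator matrix carry those vectors injectively
into the intersection of `U` with an `Fqm`-subspace of dimension at most one, so `A` has codimension
at most one. The reverse inequality is the Singleton bound.

It remains to find scattered subspaces of dimension `km/2`; enlarging one until it spans and then
shrinking it around a basis gives every dimension between `k` and `km/2`. With `σ` the Frobenius
map, `{(x, σ x)}` settles even `k`, and taking direct sums reduces odd `k` to `k = 3` with `m` even.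
There let `F` be the subfield with `[Fqm : F] = 2`, write `Fqm = F ⊕ F w`, and take
`{f x + w x : x ∈ F³}` for a `σ`-semilinear map `f` of `F³`: it is scattered if `f (f x)` is never
a combination of `x` and `f x`. If it were one, either `x` would be an eigenvector or `x` and `f x`
would span a stable plane, and over a finite field a stable hyperplane forces an eigenvector.
A counting argument gives an `f` without eigenvectors.
-/

section Subspaces

variable {Q V V' : Type*} [Field Q] [AddCommGroup V] [Module Q V] [AddCommGroup V'] [Module Q V']

lemma exists_submodule_between [FiniteDimensional Q V] {S U : Submodule Q V} (hSU : S ≤ U) {n : ℕ}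
    (hSn : finrank Q S ≤ n) (hnU : n ≤ finrank Q U) :
    ∃ T : Submodule Q V, S ≤ T ∧ T ≤ U ∧ finrank Q T = n := by
  induction n, hSn using Nat.le_induction with
  | base => exact ⟨S, le_rfl, hSU, rfl⟩
  | succ i _ ih =>
    obtain ⟨T, hST, hTU, hT⟩ := ih (by omega)
    obtain ⟨u, hu, huT⟩ : ∃ u ∈ U, u ∉ T :=
      SetLike.not_le_iff_exists.mp fun h => by have := Submodule.finrank_mono h; omega
    exact ⟨T ⊔ span Q {u}, hST.trans le_sup_left,
      sup_le hTU ((span_singleton_le_iff_mem u U).mpr hu),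
      by rw [finrank_sup_span_singleton huT, hT]⟩

lemma finrank_submodule_prod [FiniteDimensional Q V] [FiniteDimensional Q V']
    (U : Submodule Q V) (U' : Submodule Q V') :
    finrank Q (U.prod U') = finrank Q U + finrank Q U' := by
  have hrange : U.prod U' = LinearMap.range (U.subtype.prodMap U'.subtype) := by
    rw [LinearMap.range_prodMap, range_subtype, range_subtype]
  rw [hrange, LinearMap.finrank_range_of_inj (U.injective_subtype.prodMap U'.injective_subtype),
    finrank_prod]

lemma span_range_coe_basis {ι : Type*} {S : Submodule Q V} (b : Basis ι Q S) :
    span Q (Set.range fun i => (b i : V)) = S := by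
  change span Q (Set.range fun i => S.subtype (b i)) = S
  rw [Set.range_comp' S.subtype b, span_image, b.span_eq, Submodule.map_top, range_subtype]

lemma finrank_span_le_finrank (K : Type*) [Field K] [Algebra Q K] [Module K V] [IsScalarTower Q K V]
    (S : Submodule Q V) [FiniteDimensional Q S] :
    finrank K (span K (S : Set V)) ≤ finrank Q S := by
  let b := finBasis Q S
  have hspan : span K (S : Set V) = span K (Set.range fun i => (b i : V)) := by
    conv_lhs => rw [← span_range_coe_basis b]
    exact span_span_of_tower ..
  rw [hspan]
  exact (finrank_range_le_card _).trans_eq (Fintype.card_fin _)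

end Subspaces

section Scattered

variable {Q K V V' : Type*} [Field Q] [Field K] [Algebra Q K] [AddCommGroup V] [Module Q V]
  [Module K V] [AddCommGroup V'] [Module Q V'] [Module K V']

variable (K) in
/-- A `Q`-subspace of a `K`-vector space is scattered if two of its nonzero vectors are proportional
over `K` only when they are proportional over `Q`; equivalently, it meets every `K`-line in
`Q`-dimension at most one. -/
def IsScattered (U : Submodule Q V) : Prop :=
  ∀ u ∈ U, u ≠ 0 → ∀ l : K, l • u ∈ U → l ∈ Set.range (algebraMap Q K)

namespace IsScattered

lemma mono {U T : Submodule Q V} (hU : IsScattered K U) (hTU : T ≤ U) : IsScattered K T :=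
  fun u hu hu0 l hl => hU u (hTU hu) hu0 l (hTU hl)

lemma prod {U : Submodule Q V} {U' : Submodule Q V'} (hU : IsScattered K U)
    (hU' : IsScattered K U') : IsScattered K (U.prod U') := by
  rintro ⟨u, u'⟩ ⟨hu, hu'⟩ hne l ⟨hlu, hlu'⟩
  by_cases hu0 : u = 0
  · exact hU' u' hu' (fun hu'0 => hne (by rw [hu0, hu'0, Prod.mk_zero_zero])) l hlu'
  · exact hU u hu hu0 l hlu

variable [IsScalarTower Q K V] [IsScalarTower Q K V']

lemma map_linearEquiv {U : Submodule Q V} (hU : IsScattered K U) (e : V ≃ₗ[K] V') :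
    IsScattered K (U.map (e.restrictScalars Q : V →ₗ[Q] V')) := by
  rintro _ ⟨u, hu, rfl⟩ hu0 l ⟨v, hv, hvl⟩
  have hv_eq : v = l • u := e.injective (by simpa using hvl)
  exact hU u hu (fun h => hu0 (by simp [h])) l (hv_eq ▸ hv)

lemma sup_span_singleton {U : Submodule Q V} (hU : IsScattered K U) {v : V}
    (hv : v ∉ span K (U : Set V)) : IsScattered K (U ⊔ span Q {v}) := by
  intro x hx hx0 l hlx
  obtain ⟨u, hu, _, hav, rfl⟩ := mem_sup.mp hx
  obtain ⟨a, rfl⟩ := mem_span_singleton.mp hav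
  obtain ⟨u', hu', _, hbv, hlx⟩ := mem_sup.mp hlx
  obtain ⟨b, rfl⟩ := mem_span_singleton.mp hbv
  have hcoeff : l * algebraMap Q K a = algebraMap Q K b := by
    by_contra hne
    refine hv ((Submodule.smul_mem_iff _ (sub_ne_zero.mpr hne)).mp ?_)
    have : (l * algebraMap Q K a - algebraMap Q K b) • v = u' - l • u := by
      rw [sub_smul, mul_smul, algebraMap_smul, algebraMap_smul,
        sub_eq_sub_iff_add_eq_add, hlx, smul_add, add_comm]
    rw [this]
    exact sub_mem (subset_span hu') (smul_mem _ _ (subset_span hu))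
  by_cases ha : a = 0
  · have hb : b = 0 := by simpa [ha] using hcoeff.symm
    subst ha hb
    simp only [zero_smul, add_zero] at hx0 hlx
    exact hU u hu hx0 l (hlx ▸ hu')
  · refine ⟨b / a, ?_⟩
    rw [map_div₀, ← hcoeff, mul_div_cancel_right₀]
    simpa using ha

lemma exists_le_span_eq_top [FiniteDimensional Q V] {U : Submodule Q V} (hU : IsScattered K U) :
    ∃ U' : Submodule Q V, U ≤ U' ∧ IsScattered K U' ∧ span K (U' : Set V) = ⊤ := by
  induction U using WellFoundedGT.induction with
  | ind U ih =>
    by_cases hspan : span K (U : Set V) = ⊤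
    · exact ⟨U, le_rfl, hU, hspan⟩
    obtain ⟨v, -, hv⟩ := SetLike.exists_of_lt (lt_top_iff_ne_top.mpr hspan)
    have hlt : U < U ⊔ span Q {v} :=
      left_lt_sup.mpr fun h => hv (subset_span (h (mem_span_singleton_self v)))
    obtain ⟨U', hle, hU'⟩ := ih _ hlt (hU.sup_span_singleton hv)
    exact ⟨U', hlt.le.trans hle, hU'⟩

end IsScattered

lemma exists_le_finrank_eq_span_eq_top [IsScalarTower Q K V] [FiniteDimensional Q V]
    {U : Submodule Q V} (hspan : span K (U : Set V) = ⊤) {n : ℕ}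
    (hVn : finrank K V ≤ n) (hnU : n ≤ finrank Q U) :
    ∃ T ≤ U, finrank Q T = n ∧ span K (T : Set V) = ⊤ := by
  have : FiniteDimensional K V := .of_restrictScalars_finite Q K V
  obtain ⟨b, hbU, hb_span, hb⟩ := exists_linearIndependent K (U : Set V)
  have : Fintype b := @Fintype.ofFinite b hb.finite
  have hcard : Fintype.card b = finrank K V := by
    rw [← finrank_span_eq_card hb, Subtype.range_coe, hb_span, hspan, finrank_top]
  have hfinrank : finrank Q (span Q b) ≤ n := by
    rw [← hcard] at hVn
    rw [← Subtype.range_coe (s := b)]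
    exact (finrank_range_le_card _).trans hVn
  obtain ⟨T, hbT, hTU, hT⟩ := exists_submodule_between (span_le.mpr hbU) hfinrank hnU
  refine ⟨T, hTU, hT, eq_top_iff.mpr ?_⟩
  rw [← hspan, ← hb_span]
  exact span_mono (subset_span.trans hbT)

end Scattered

section SemilinearEigenvectors

variable {F V : Type*} [Field F] [AddCommGroup V] [Module F V]

/- In the quotient `V ⧸ ker ℓ ≅ F` the map `f - c` becomes a multiple of `σ - 1`, which kills `1`
and hence is not surjective over a finite field; so `f - c` is not injective on `V`. -/
lemma exists_map_eq_smul_of_stable_ker [Finite V] {σ : F →+* F} (f : V →ₛₗ[σ] V) {ℓ : Dual F V}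
    (hℓ : ℓ ≠ 0) (hstable : ∀ x, ℓ x = 0 → ℓ (f x) = 0) : ∃ x ≠ 0, ∃ c : F, f x = c • x := by
  have : Finite F := .of_surjective ℓ (LinearMap.surjective hℓ)
  obtain ⟨v, hv⟩ := LinearMap.surjective hℓ 1
  have hfℓ (x : V) : ℓ (f x) = ℓ (f v) * σ (ℓ x) := by
    have := hstable (x - ℓ x • v) (by simp [hv])
    rw [map_sub, map_sub, map_smulₛₗ, map_smul, sub_eq_zero, smul_eq_mul] at this
    rw [this, mul_comm]
  set c := ℓ (f v)
  have hσ : ¬ Function.Surjective fun a => σ a - a := fun h =>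
    one_ne_zero (Finite.injective_iff_surjective.mpr h (by simp) : (1 : F) = 0)
  have hnot_surj : ¬ Function.Surjective fun x => f x - c • x := fun hsurj => hσ fun a => by
    obtain ⟨x, hx⟩ := hsurj ((c * a) • v)
    have hca : c * (σ (ℓ x) - ℓ x) = c * a := by
      have := congrArg ℓ hx
      simp only [map_sub, map_smul, hfℓ, smul_eq_mul, hv] at this
      linear_combination this
    have hc : c ≠ 0 := fun hc => by
      obtain ⟨y, hy⟩ := hsurj v
      have := congrArg ℓ hy
      simp [hfℓ, hc, hv] at this
    exact ⟨ℓ x, mul_left_cancel₀ hc hca⟩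
  obtain ⟨x, y, hxy, hne⟩ := Function.not_injective_iff.mp
    (mt Finite.injective_iff_surjective.mp hnot_surj)
  refine ⟨x - y, sub_ne_zero.mpr hne, c, ?_⟩
  rw [map_sub, smul_sub]
  exact sub_eq_sub_iff_sub_eq_sub.mp hxy

lemma map_map_ne_of_forall_map_ne_smul [Finite V] (hV : finrank F V = 3) {σ : F →+* F}
    {f : V →ₛₗ[σ] V} (hf : ∀ x ≠ 0, ∀ c : F, f x ≠ c • x) {x : V} (hx : x ≠ 0) (a b : F) :
    f (f x) ≠ a • x + b • f x := by
  intro hab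
  have hstable : ∀ y ∈ span F {x, f x}, f y ∈ span F {x, f x} := by
    intro y hy
    obtain ⟨p, r, rfl⟩ := mem_span_pair.mp hy
    refine mem_span_pair.mpr ⟨σ r * a, σ p + σ r * b, ?_⟩
    rw [map_add, map_smulₛₗ, map_smulₛₗ, hab]
    module
  have hplane : finrank F (span F {x, f x}) = 2 := by
    have hli : LinearIndependent F ![x, f x] :=
      (LinearIndependent.pair_iff' hx).mpr fun c hc => hf x hx c hc.symm
    rw [← Matrix.range_cons_cons_empty x (f x) ![], finrank_span_eq_card hli, Fintype.card_fin]
  obtain ⟨ℓ, hℓ, hle⟩ := exists_le_ker_of_lt_top (span F {x, f x})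
    (lt_top_of_finrank_lt_finrank (by omega))
  have hker : span F {x, f x} = LinearMap.ker ℓ := by
    refine eq_of_le_of_finrank_eq hle ?_
    have := Dual.finrank_ker_add_one_of_ne_zero hℓ
    omega
  obtain ⟨z, hz, c, hzc⟩ := exists_map_eq_smul_of_stable_ker f hℓ fun y hy => by
    have := hstable y (hker ▸ hy)
    rwa [hker] at this
  exact hf z hz c hzc

/-- The `σ`-semilinear map `x ↦ (σ x₁, σ x₂, b σ x₀ + σ x₁)` of `F³`, that is, `σ` followed by the
transposed companion matrix of `T³ - T - b`. -/
def semilinearCompanion (σ : F →+* F) (b : F) : (Fin 3 → F) →ₛₗ[σ] (Fin 3 → F) where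
  toFun x := ![σ (x 1), σ (x 2), b * σ (x 0) + σ (x 1)]
  map_add' x y := by
    ext i; fin_cases i <;> simp; ring
  map_smul' c x := by
    ext i; fin_cases i <;> simp; ring

lemma semilinearCompanion_ne_smul {σ : F →+* F} {b : F}
    (hb : ∀ y, σ (σ y) * σ y * y - σ (σ y) ≠ σ b) {x : Fin 3 → F} (hx : x ≠ 0) (c : F) :
    semilinearCompanion σ b x ≠ c • x := by
  intro h
  have h0 : σ (x 1) = c * x 0 := congrFun h 0
  have h1 : σ (x 2) = c * x 1 := congrFun h 1
  have h2 : b * σ (x 0) + σ (x 1) = c * x 2 := congrFun h 2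
  have hx0 : x 0 ≠ 0 := fun hx0 => hx <| by
    have hx1 : x 1 = 0 := by simpa [hx0] using h0
    have hx2 : x 2 = 0 := by simpa [hx1] using h1
    ext i; fin_cases i <;> simpa
  have hσx0 : σ (x 0) ≠ 0 := by simpa
  -- Eliminating `c` and `x 2` from the three equations leaves one condition on `x 1 / x 0`.
  refine hb (x 1 / x 0) ?_
  have hσσx0 : σ (σ (x 0)) ≠ 0 := by simpa
  have h0' : σ (σ (x 1)) = σ c * σ (x 0) := by rw [h0, map_mul]
  have h2' : σ b * σ (σ (x 0)) + σ (σ (x 1)) = σ c * (c * x 1) := by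
    rw [← h1, ← map_mul σ c, ← h2, map_add, map_mul]
  simp only [map_div₀]
  field_simp
  linear_combination σ (x 1) * x 1 * h0' + σ c * σ (x 0) * x 1 * h0 - σ (x 0) * x 0 * h2'

lemma exists_semilinearCompanion_ne_smul [Finite F] (σ : F →+* F) :
    ∃ b, ∀ x ≠ 0, ∀ c : F, semilinearCompanion σ b x ≠ c • x := by
  have hnot_inj : ¬ Function.Injective fun y => σ (σ y) * σ y * y - σ (σ y) := fun h =>
    one_ne_zero (h (by simp) : (1 : F) = 0)
  obtain ⟨d, hd⟩ := not_forall.mp (mt Finite.injective_iff_surjective.mpr hnot_inj)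
  obtain ⟨b, rfl⟩ := Finite.surjective_of_injective σ.injective d
  exact ⟨b, fun x hx => semilinearCompanion_ne_smul (fun y hy => hd ⟨y, hy⟩) hx⟩

end SemilinearEigenvectors

section Constructions

lemma mem_range_algebraMap_of_frobenius_eq (Q : Type*) {K : Type*} [Field Q] [Fintype Q] [Field K]
    [Algebra Q K] [FiniteDimensional Q K] {x : K} (hx : FiniteField.frobeniusAlgHom Q K x = x) :
    x ∈ Set.range (algebraMap Q K) := by
  have : Finite K := Module.finite_of_finite Q
  rw [IsGalois.mem_range_algebraMap_iff_fixed]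
  intro g
  obtain ⟨i, rfl⟩ := (FiniteField.bijective_frobeniusAlgEquivOfAlgebraic_pow Q K).2 g
  rw [AlgEquiv.coe_pow]
  exact Function.IsFixedPt.iterate hx i

lemma exists_intermediateField_finrank_eq_prime {Q K : Type*} [Field Q] [Field K] [Algebra Q K]
    [FiniteDimensional Q K] [IsGalois Q K] {p : ℕ} [Fact p.Prime] (hp : p ∣ finrank Q K) :
    ∃ F : IntermediateField Q K, finrank F K = p := by
  rw [← IsGalois.card_aut_eq_finrank] at hp
  obtain ⟨g, hg⟩ := exists_prime_orderOf_dvd_card' p hp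
  exact ⟨.fixedField (Subgroup.zpowers g), by
    rw [IntermediateField.finrank_fixedField_eq_card, Nat.card_zpowers, hg]⟩

lemma exists_bijective_add_mul_of_finrank_eq_two {F K : Type*} [Field F] [Field K] [Algebra F K]
    (hFK : finrank F K = 2) :
    ∃ w : K, Function.Bijective fun p : F × F => algebraMap F K p.1 + algebraMap F K p.2 * w := by
  have : FiniteDimensional F K := FiniteDimensional.of_finrank_pos (by omega)
  obtain ⟨w, hw⟩ : ∃ w : K, w ∉ LinearMap.range (Algebra.linearMap F K) := by
    by_contra! h
    have := LinearMap.finrank_range_le (Algebra.linearMap F K)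
    rw [(eq_top_iff'.mpr h), finrank_top, finrank_self] at this
    omega
  let φ : F × F →ₗ[F] K := (Algebra.linearMap F K).coprod (LinearMap.toSpanSingleton F K w)
  have hφ : ⇑φ = fun p => algebraMap F K p.1 + algebraMap F K p.2 * w := by
    ext p; simp [φ, Algebra.smul_def]
  have hinj : Function.Injective φ := by
    refine (injective_iff_map_eq_zero φ).mpr fun ⟨a, b⟩ hab => ?_
    simp only [hφ] at hab
    have hb : b = 0 := by
      by_contra hb
      refine hw ⟨-a / b, ?_⟩
      have : algebraMap F K b ≠ 0 := by simpa
      rw [Algebra.linearMap_apply, map_div₀, map_neg, div_eq_iff this]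
      linear_combination -hab
    simpa [hb] using hab
  refine ⟨w, hφ ▸ ⟨hinj, ?_⟩⟩
  exact (LinearMap.injective_iff_surjective_of_finrank_eq_finrank (by simp [hFK])).mp hinj

variable {Q K : Type*} [Field Q] [Field K] [Algebra Q K]

lemma isScattered_range_id_prod_compLeft {σ : K →ₐ[Q] K}
    (hσ : ∀ a, σ a = a → a ∈ Set.range (algebraMap Q K)) (ι : Type*) :
    IsScattered K (LinearMap.range (LinearMap.id.prod (σ.toLinearMap.compLeft ι))) := by
  rintro _ ⟨x, rfl⟩ hx l ⟨y, hy⟩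
  have hy1 : y = l • x := congrArg Prod.fst hy
  have hy2 (i : ι) : σ (y i) = l * σ (x i) := congrFun (congrArg Prod.snd hy) i
  obtain ⟨i, hi⟩ := Function.ne_iff.mp fun hx0 : x = 0 => hx (by rw [hx0, map_zero])
  have hσx : σ (x i) ≠ 0 := by simpa using hi
  refine hσ l (mul_right_cancel₀ hσx ?_)
  rw [← hy2, hy1, Pi.smul_apply, smul_eq_mul, map_mul]

variable {F : Type*} [Field F] [Algebra Q F] [Algebra F K] [IsScalarTower Q F K] {ι : Type*}

/-- The `Q`-linear map `x ↦ f x + w x` from `F^ι` to `K^ι` attached to a semilinear endomorphism `f`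
of `F^ι` and an element `w` of the extension field `K` of `F`. -/
def addMulEmbedding (σ : F →ₐ[Q] F) (f : (ι → F) →ₛₗ[(σ : F →+* F)] (ι → F)) (w : K) :
    (ι → F) →ₗ[Q] (ι → K) where
  toFun x i := algebraMap F K (f x i) + algebraMap F K (x i) * w
  map_add' x y := by
    ext i
    simp only [map_add, Pi.add_apply]
    ring
  map_smul' a x := by
    ext i
    rw [← algebraMap_smul F a x, map_smulₛₗ]
    simp [Algebra.smul_def, ← IsScalarTower.algebraMap_apply, mul_add, mul_assoc]

lemma isScattered_range_addMulEmbedding {σ : F →ₐ[Q] F}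
    (hσ : ∀ a, σ a = a → a ∈ Set.range (algebraMap Q F)) {f : (ι → F) →ₛₗ[(σ : F →+* F)] (ι → F)}
    (hf : ∀ x ≠ 0, ∀ a b : F, f (f x) ≠ a • x + b • f x) {w : K}
    (hw : Function.Bijective fun p : F × F => algebraMap F K p.1 + algebraMap F K p.2 * w) :
    IsScattered K (LinearMap.range (addMulEmbedding σ f w)) := by
  rintro _ ⟨x, rfl⟩ hx l ⟨y, hy⟩
  replace hx : x ≠ 0 := fun hx0 => hx (by rw [hx0, map_zero])
  obtain ⟨⟨α, β⟩, rfl⟩ := hw.2 l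
  obtain ⟨⟨B, A⟩, hAB⟩ := hw.2 (w * w)
  have hcoord (i : ι) :
      (f y i, y i) = (α * f x i + β * B * x i, (α + A * β) * x i + β * f x i) := by
    apply hw.1
    have hyi : algebraMap F K (f y i) + algebraMap F K (y i) * w =
      (algebraMap F K α + algebraMap F K β * w) *
        (algebraMap F K (f x i) + algebraMap F K (x i) * w) := congrFun hy i
    simp only [hyi, map_add, map_mul]
    linear_combination -(algebraMap F K β * algebraMap F K (x i)) * hAB
  have hfy : f y = α • f x + (β * B) • x := funext fun i => congrArg Prod.fst (hcoord i)
  have hy_eq : y = (α + A * β) • x + β • f x := funext fun i => congrArg Prod.snd (hcoord i)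
  rw [hy_eq, map_add, map_smulₛₗ, map_smulₛₗ] at hfy
  by_cases hβ : β = 0
  · have hfx : f x ≠ 0 := fun h => hf x hx 0 0 (by simp [h])
    obtain ⟨a, rfl⟩ := hσ α (smul_left_injective F hfx (by simpa [hβ] using hfy))
    exact ⟨a, by simp [hβ, ← IsScalarTower.algebraMap_apply]⟩
  · have hσβ : σ β ≠ 0 := by simpa
    have hffx : σ β • f (f x) = (β * B) • x + (α - σ (α + A * β)) • f x := by
      rw [sub_smul, add_sub_left_comm, ← add_sub_assoc]
      exact eq_sub_of_add_eq' hfy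
    refine (hf x hx ((σ β)⁻¹ * (β * B)) ((σ β)⁻¹ * (α - σ (α + A * β))) ?_).elim
    rw [mul_smul _ (β * B), mul_smul _ (α - _), ← smul_add, ← hffx, inv_smul_smul₀ hσβ]

lemma finrank_range_addMulEmbedding [FiniteDimensional Q F] [Fintype ι] (σ : F →ₐ[Q] F)
    (f : (ι → F) →ₛₗ[(σ : F →+* F)] (ι → F)) {w : K}
    (hw : Function.Injective fun p : F × F => algebraMap F K p.1 + algebraMap F K p.2 * w) :
    finrank Q (LinearMap.range (addMulEmbedding σ f w)) = Fintype.card ι * finrank Q F := by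
  have hinj : Function.Injective (addMulEmbedding σ f w) := fun x y hxy => funext fun i =>
    congrArg Prod.snd (hw (congrFun hxy i) : (f x i, x i) = (f y i, y i))
  rw [LinearMap.finrank_range_of_inj hinj, finrank_pi_fintype, Finset.sum_const, smul_eq_mul,
    Finset.card_univ]

variable (Q K) [Finite Q] [FiniteDimensional Q K]

lemma exists_isScattered_prod_self (j : ℕ) :
    ∃ U : Submodule Q ((Fin j → K) × (Fin j → K)),
      IsScattered K U ∧ finrank Q U = j * finrank Q K := by
  have := Fintype.ofFinite Q
  let σ := FiniteField.frobeniusAlgHom Q K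
  refine ⟨_, isScattered_range_id_prod_compLeft (σ := σ)
    (fun _ => mem_range_algebraMap_of_frobenius_eq Q) (Fin j), ?_⟩
  rw [LinearMap.finrank_range_of_inj fun x y hxy => congrArg Prod.fst hxy, finrank_pi_fintype,
    Finset.sum_const, smul_eq_mul, Finset.card_univ, Fintype.card_fin]

variable {Q K} in
lemma exists_isScattered_three (heven : Even (finrank Q K)) :
    ∃ U : Submodule Q (Fin 3 → K), IsScattered K U ∧ 2 * finrank Q U = 3 * finrank Q K := by
  have : Finite K := Module.finite_of_finite Q
  obtain ⟨F, hF⟩ := exists_intermediateField_finrank_eq_prime (p := 2) heven.two_dvd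
  obtain ⟨w, hw⟩ := exists_bijective_add_mul_of_finrank_eq_two hF
  have := Fintype.ofFinite Q
  let σ := FiniteField.frobeniusAlgHom Q F
  obtain ⟨b, hb⟩ := exists_semilinearCompanion_ne_smul (σ : F →+* F)
  have hno_plane (x : Fin 3 → F) (hx : x ≠ 0) :=
    map_map_ne_of_forall_map_ne_smul (finrank_fin_fun F) hb hx
  refine ⟨_, isScattered_range_addMulEmbedding
    (fun _ => mem_range_algebraMap_of_frobenius_eq Q) hno_plane hw, ?_⟩
  rw [finrank_range_addMulEmbedding _ _ hw.1, Fintype.card_fin, ← finrank_mul_finrank Q F K, hF]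
  ring

variable {Q K} in
theorem exists_isScattered {k : ℕ} (hk : 2 ≤ k) (heven : Even (k * finrank Q K)) :
    ∃ U : Submodule Q (Fin k → K), IsScattered K U ∧ 2 * finrank Q U = k * finrank Q K := by
  obtain ⟨j, rfl | hj⟩ := k.even_or_odd'
  · obtain ⟨U, hU, hdim⟩ := exists_isScattered_prod_self Q K j
    let e : ((Fin j → K) × (Fin j → K)) ≃ₗ[K] (Fin (2 * j) → K) :=
      LinearEquiv.ofFinrankEq _ _ (by simp; ring)
    refine ⟨_, hU.map_linearEquiv e, ?_⟩
    rw [LinearEquiv.finrank_map_eq, hdim]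
    ring
  · obtain ⟨i, rfl⟩ : ∃ i, j = i + 1 := ⟨j - 1, by omega⟩
    have hm : Even (finrank Q K) :=
      (Nat.even_mul.mp heven).resolve_left (Nat.not_even_iff_odd.mpr ⟨_, hj⟩)
    obtain ⟨U, hU, hdim⟩ := exists_isScattered_prod_self Q K i
    obtain ⟨U', hU', hdim'⟩ := exists_isScattered_three hm
    let e : (((Fin i → K) × (Fin i → K)) × (Fin 3 → K)) ≃ₗ[K] (Fin k → K) :=
      LinearEquiv.ofFinrankEq _ _ (by simp; omega)
    refine ⟨_, (hU.prod hU').map_linearEquiv e, ?_⟩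
    rw [LinearEquiv.finrank_map_eq, finrank_submodule_prod, mul_add, hdim, hdim', hj]
    ring

end Constructions

section GaloisDescent

variable {Fq Fqm} {n : ℕ}

lemma finrank_dualCode_add_finrank (C : Submodule Fqm (Fin n → Fqm)) :
    finrank Fqm (dualCode Fqm C) + finrank Fqm C = n := by
  have hdual : dualCode Fqm C =
      (C.map (dotProductEquiv Fqm (Fin n) : _ →ₗ[Fqm] _)).dualCoannihilator := by
    ext v
    rw [mem_dualCoannihilator]
    refine ⟨?_, fun hv c hc => hv _ (mem_map_of_mem hc)⟩
    rintro hv _ ⟨c, hc, rfl⟩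
    exact hv c hc
  rw [hdual, ← LinearEquiv.finrank_map_eq (dotProductEquiv Fqm (Fin n)) C, add_comm,
    Subspace.finrank_add_finrank_dualCoannihilator_eq, finrank_fin_fun]

lemma GaloisClosed.dualCode {A : Submodule Fqm (Fin n → Fqm)} (hA : GaloisClosed Fq Fqm A) :
    GaloisClosed Fq Fqm (dualCode Fqm A) := fun θ v hv c hc => by
  simpa using congrArg θ (hv _ (hA θ.symm c hc))

variable (Fq) in
/-- The vectors of `B` with entries in the subfield `Fq`, as a subspace of `Fq^n`. -/
def rationalPart (B : Submodule Fqm (Fin n → Fqm)) : Submodule Fq (Fin n → Fq) :=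
  (B.restrictScalars Fq).comap ((Algebra.linearMap Fq Fqm).compLeft (Fin n))

lemma mem_rationalPart {B : Submodule Fqm (Fin n → Fqm)} {x : Fin n → Fq} :
    x ∈ rationalPart Fq B ↔ algebraMap Fq Fqm ∘ x ∈ B :=
  Iff.rfl

namespace GaloisClosed

variable [FiniteDimensional Fq Fqm] [IsGalois Fq Fqm] {B : Submodule Fqm (Fin n → Fqm)}

lemma trace_comp_mem_rationalPart (hB : GaloisClosed Fq Fqm B) {v : Fin n → Fqm} (hv : v ∈ B) :
    Algebra.trace Fq Fqm ∘ v ∈ rationalPart Fq B := by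
  have htrace : algebraMap Fq Fqm ∘ Algebra.trace Fq Fqm ∘ v = ∑ θ : Gal(Fqm/Fq), θ ∘ v := by
    ext i
    simp [trace_eq_sum_automorphisms]
  rw [mem_rationalPart, htrace]
  exact sum_mem fun θ _ => hB θ v hv

lemma le_span_rationalPart (hB : GaloisClosed Fq Fqm B) :
    B ≤ span Fqm ((rationalPart Fq B).map ((Algebra.linearMap Fq Fqm).compLeft (Fin n)) :
      Set (Fin n → Fqm)) := by
  intro v hv
  let b := finBasis Fq Fqm
  have hexpand :
      v = ∑ j, b.traceDual j • (algebraMap Fq Fqm ∘ Algebra.trace Fq Fqm ∘ (b j • v)) := by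
    ext i
    conv_lhs => rw [← b.traceDual.sum_repr (v i)]
    simp [Algebra.smul_def, mul_comm]
  rw [hexpand]
  exact sum_mem fun j _ => smul_mem _ _ <|
    subset_span ⟨_, hB.trace_comp_mem_rationalPart (B.smul_mem (b j) hv), rfl⟩

lemma finrank_le_finrank_rationalPart (hB : GaloisClosed Fq Fqm B) :
    finrank Fqm B ≤ finrank Fq (rationalPart Fq B) :=
  calc finrank Fqm B ≤ _ := finrank_mono hB.le_span_rationalPart
    _ ≤ _ := finrank_span_le_finrank Fqm _
    _ ≤ finrank Fq (rationalPart Fq B) := finrank_map_le _ _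

end GaloisClosed

end GaloisDescent

section Systems

variable {Fq Fqm} {n k : ℕ}

lemma IsSystem.exists_isAssociatedSystem {U : Submodule Fq (Fin k → Fqm)}
    [FiniteDimensional Fq U] (hU : IsSystem Fq Fqm n U) :
    ∃ C : Submodule Fqm (Fin n → Fqm), IsAssociatedSystem Fq Fqm C U := by
  let b := finBasisOfFinrankEq Fq U hU.1
  refine ⟨_, fun i j => (b j : Fin k → Fqm) i, rfl, (span_range_coe_basis b).symm⟩

namespace IsAssociatedSystem

variable {C : Submodule Fqm (Fin n → Fqm)} {U : Submodule Fq (Fin k → Fqm)}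

lemma isNondegenerate (hCU : IsAssociatedSystem Fq Fqm C U) (hU : IsSystem Fq Fqm n U) :
    IsNondegenerate Fq Fqm k C := by
  obtain ⟨G, hG, rfl⟩ := hCU
  exact ⟨G, hG, hU.1⟩

lemma finrank_eq (hCU : IsAssociatedSystem Fq Fqm C U) (hU : IsSystem Fq Fqm n U) :
    finrank Fqm C = k := by
  obtain ⟨G, rfl, rfl⟩ := hCU
  have hcols : span Fqm (Set.range (Matrix.col (Matrix.of G))) = ⊤ := by
    rw [← hU.2]
    exact (span_span_of_tower ..).symm
  calc finrank Fqm (span Fqm (Set.range G)) = (Matrix.of G).rank :=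
        (Matrix.rank_eq_finrank_span_row _).symm
    _ = finrank Fqm (span Fqm (Set.range (Matrix.col (Matrix.of G)))) :=
        Matrix.rank_eq_finrank_span_cols _
    _ = k := by rw [hcols, finrank_top, finrank_fin_fun]

end IsAssociatedSystem

lemma IsEvasive.finrank_inf_le {U : Submodule Fq (Fin k → Fqm)} [FiniteDimensional Fq Fqm] {h r : ℕ}
    (hU : IsEvasive Fq Fqm U h r) (hk : h ≤ k) {W : Submodule Fqm (Fin k → Fqm)}
    (hW : finrank Fqm W ≤ h) : finrank Fq ↥(U ⊓ W.restrictScalars Fq) ≤ r := by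
  obtain ⟨T, hWT, -, hT⟩ := exists_submodule_between le_top hW (by simpa using hk)
  exact (finrank_mono (inf_le_inf_left U hWT)).trans (hU T hT)

lemma IsScattered.isEvasive {U : Submodule Fq (Fin k → Fqm)} (hU : IsScattered Fqm U) :
    IsEvasive Fq Fqm U 1 1 := by
  intro W hW
  by_cases hbot : U ⊓ W.restrictScalars Fq = ⊥
  · rw [hbot, finrank_bot]
    exact zero_le_one
  obtain ⟨u, ⟨huU, huW⟩, hu⟩ := exists_mem_ne_zero_of_ne_bot hbot
  refine finrank_le_one ⟨u, huU, huW⟩ ?_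
  rintro ⟨v, hvU, hvW⟩
  obtain ⟨l, hl⟩ := exists_smul_eq_of_finrank_eq_one hW (x := (⟨u, huW⟩ : W))
    (fun h => hu (congrArg Subtype.val h)) ⟨v, hvW⟩
  replace hl : l • u = v := congrArg Subtype.val hl
  obtain ⟨c, rfl⟩ := hU u huU hu l (hl ▸ hvU)
  exact ⟨c, Subtype.ext (by simpa using hl)⟩

end Systems

section GeneralizedRankWeights

variable {Fq Fqm} {n k : ℕ} {C : Submodule Fqm (Fin n → Fqm)}

lemma grw_le_sub_finrank_add {s : ℕ} (hs : s ≤ finrank Fqm C) :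
    grw Fq Fqm C s ≤ n - finrank Fqm C + s := by
  have hCn : finrank Fqm C ≤ n := by simpa using finrank_le C
  let π : (Fin n → Fqm) →ₗ[Fqm] (Fin (finrank Fqm C - s) → Fqm) :=
    LinearMap.funLeft Fqm Fqm (Fin.castLE (by omega))
  have hπ : finrank Fqm (LinearMap.ker π) = n - finrank Fqm C + s := by
    have hsurj : LinearMap.range π = ⊤ := LinearMap.range_eq_top.mpr
      (LinearMap.funLeft_surjective_of_injective _ _ _ (Fin.castLE_injective _))
    have := LinearMap.finrank_range_add_finrank_ker π
    rw [hsurj, finrank_top, finrank_fin_fun, finrank_fin_fun] at this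
    omega
  refine Nat.sInf_le ⟨LinearMap.ker π, ?_, ?_, hπ⟩
  · intro θ v hv
    ext i
    have : v (Fin.castLE _ i) = 0 := congrFun hv i
    simp [π, LinearMap.funLeft_apply, this]
  · have hsum := finrank_sup_add_finrank_inf_eq (LinearMap.ker π) C
    have hsup : finrank Fqm ↥(LinearMap.ker π ⊔ C) ≤ n := by
      simpa using finrank_le (LinearMap.ker π ⊔ C)
    omega

lemma exists_finrank_eq_grw {s : ℕ} (hs : s ≤ finrank Fqm C) :
    ∃ A : Submodule Fqm (Fin n → Fqm),
      GaloisClosed Fq Fqm A ∧ s ≤ finrank Fqm ↥(A ⊓ C) ∧ finrank Fqm A = grw Fq Fqm C s :=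
  Nat.sInf_mem (s := {x | ∃ A : Submodule Fqm (Fin n → Fqm),
    GaloisClosed Fq Fqm A ∧ s ≤ finrank Fqm ↥(A ⊓ C) ∧ finrank Fqm A = x})
    ⟨_, ⊤, fun _ _ _ => mem_top, by rwa [top_inf_eq], rfl⟩

lemma finrank_inf_span_row_le (G : Matrix (Fin k) (Fin n) Fqm) (A : Submodule Fqm (Fin n → Fqm)) :
    finrank Fqm ↥(A ⊓ span Fqm (Set.range G.row)) ≤ finrank Fqm (A.comap G.vecMulLinear) := by
  rw [← range_vecMulLinear, inf_comm, ← map_comap_eq]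
  exact finrank_map_le _ _

lemma finrank_rationalPart_dualCode_le [FiniteDimensional Fq Fqm] {G : Matrix (Fin k) (Fin n) Fqm}
    (hG : finrank Fq (span Fq (Set.range G.col)) = n) (A : Submodule Fqm (Fin n → Fqm)) :
    finrank Fq (rationalPart Fq (dualCode Fqm A)) ≤
      finrank Fq ↥(span Fq (Set.range G.col) ⊓
        (dualCode Fqm (A.comap G.vecMulLinear)).restrictScalars Fq) := by
  let φ : (Fin n → Fq) →ₗ[Fq] (Fin k → Fqm) := Fintype.linearCombination Fq G.col
  have hφ_inj : Function.Injective φ := by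
    rw [← linearIndependent_iff_injective_fintypeLinearCombination,
      linearIndependent_iff_card_eq_finrank_span, Fintype.card_fin, Set.finrank, hG]
  have hφ (x : Fin n → Fq) : φ x = G.mulVec (algebraMap Fq Fqm ∘ x) := by
    ext i
    simp [φ, Fintype.linearCombination_apply, Matrix.mulVec, dotProduct, Algebra.smul_def, mul_comm]
  rw [(equivMapOfInjective φ hφ_inj _).finrank_eq]
  refine finrank_mono ?_
  rintro _ ⟨x, hx, rfl⟩
  refine ⟨?_, fun c hc => ?_⟩
  · rw [← Fintype.range_linearCombination]
    exact ⟨x, rfl⟩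
  · change c ⬝ᵥ φ x = 0
    rw [hφ, Matrix.dotProduct_mulVec]
    exact hx _ hc

theorem IsEvasive.le_grw [FiniteDimensional Fq Fqm] [IsGalois Fq Fqm]
    {U : Submodule Fq (Fin k → Fqm)} {h r : ℕ} (hev : IsEvasive Fq Fqm U h r) (hk : h ≤ k)
    (hU : IsSystem Fq Fqm n U) (hCU : IsAssociatedSystem Fq Fqm C U) :
    n - r ≤ grw Fq Fqm C (k - h) := by
  obtain ⟨A, hA, hAC, hAgrw⟩ := exists_finrank_eq_grw (Fq := Fq) (C := C) (s := k - h)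
    (by rw [hCU.finrank_eq hU]; omega)
  obtain ⟨G, rfl, rfl⟩ := hCU
  let Γ := A.comap (Matrix.vecMulLinear G)
  have hΓ : finrank Fqm (dualCode Fqm Γ) ≤ h := by
    have := finrank_dualCode_add_finrank Γ
    have : k - h ≤ finrank Fqm Γ := hAC.trans (finrank_inf_span_row_le G A)
    omega
  have hdual : finrank Fqm (dualCode Fqm A) ≤ r :=
    calc finrank Fqm (dualCode Fqm A) ≤ finrank Fq (rationalPart Fq (dualCode Fqm A)) :=
          hA.dualCode.finrank_le_finrank_rationalPart
      _ ≤ _ := finrank_rationalPart_dualCode_le hU.1 A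
      _ ≤ r := hev.finrank_inf_le hk hΓ
  have := finrank_dualCode_add_finrank A
  omega

end GeneralizedRankWeights

theorem exists_isSystem_isScattered {Fq Fqm : Type} [Field Fq] [Field Fqm] [Algebra Fq Fqm]
    [Finite Fq] [FiniteDimensional Fq Fqm] {k n : ℕ} (hk : 2 ≤ k)
    (heven : Even (k * finrank Fq Fqm)) (hkn : k ≤ n) (hn : 2 * n ≤ k * finrank Fq Fqm) :
    ∃ U : Submodule Fq (Fin k → Fqm), IsSystem Fq Fqm n U ∧ IsScattered Fqm U := by
  obtain ⟨U, hU, hdim⟩ := exists_isScattered hk heven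
  obtain ⟨U', hUU', hU', hspan⟩ := hU.exists_le_span_eq_top
  have hle := finrank_mono hUU'
  obtain ⟨T, hTU', hT, hTspan⟩ :=
    exists_le_finrank_eq_span_eq_top hspan (n := n) (by simpa using hkn) (by omega)
  exact ⟨T, ⟨hT, hTspan⟩, hU'.mono hTU'⟩

/-- if `km` is even, for every `k ≤ n ≤ km/2` there is a nondegenerate
`[n,k]` code which is `(k-1)`-MRD. -/
theorem stmt4 [Fintype Fq] (m k : ℕ) (hm : finrank Fq Fqm = m) (hk : 2 ≤ k)
    (heven : Even (k * m)) (n : ℕ) (hkn : k ≤ n) (hn : 2 * n ≤ k * m) :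
    ∃ C : Submodule Fqm (Fin n → Fqm), finrank Fqm ↥C = k ∧
      IsNondegenerate Fq Fqm k C ∧ grw Fq Fqm C (k - 1) = n - 1 := by
  subst hm
  have : FiniteDimensional Fq Fqm :=
    .of_finrank_pos (Nat.pos_of_mul_pos_left (a := k) (by omega))
  have : Finite Fqm := Module.finite_of_finite Fq
  obtain ⟨U, hU, hU_scattered⟩ := exists_isSystem_isScattered hk heven hkn hn
  obtain ⟨C, hCU⟩ := hU.exists_isAssociatedSystem
  have hC : finrank Fqm C = k := hCU.finrank_eq hU
  refine ⟨C, hC, hCU.isNondegenerate hU, le_antisymm ?_ ?_⟩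
  · have hle : grw Fq Fqm C (k - 1) ≤ n - finrank Fqm C + (k - 1) :=
      grw_le_sub_finrank_add (by omega)
    omega
  · exact hU_scattered.isEvasive.le_grw (by omega) hU hCU
end
end

section
/- Let 0 < k < n, let C be a nondegenerate [n,k]_{q^m/q} code with d(C) ≥ 2, let U be a system associated to C and let U' be a system associated to C^⊥ (the rank-metric dual of U). Let h, r be integers with 0 ≤ h < k and h ≤ r ≤ n − k + h − 1. Then U is (h,r)-evasive if and only if U' is (n−k−r+h−1, n−r−2)-evasive. -/
open Module Submodule

noncomputable section

variable (Fq Fqm : Type) [Field Fq] [Field Fqm] [Algebra Fq Fqm]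

/-!
For a field extension `L / K` and a `K`-subspace `T` of `K^n`, write `T_L` for the `L`-span of `T`.
A system associated to `C` is a copy of `K^n` embedded by a generator matrix `G`, and the kernel of
`G` over `L` is `C^⊥`. The system fails to be `(h, r)`-evasive exactly when some `r + 1` independent
vectors of it span at most `h` dimensions over `L`, so by rank-nullity evasiveness says that
  `dim (T_L ⊓ C^⊥) + h ≤ r` for every `T` of dimension `r + 1`.
Since `(T^⊥)_L = (T_L)^⊥`, the dimension formula gives
  `dim (T_L ⊓ C^⊥) + dim C = dim T + dim ((T^⊥)_L ⊓ C)`,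
which turns the condition on `T` for `C` into the corresponding condition on `T^⊥` for `C^⊥`.
-/

section LinearAlgebra

variable {K V W : Type*} [DivisionRing K] [AddCommGroup V] [Module K V] [AddCommGroup W]
  [Module K W]

theorem exists_submodule_le_finrank_eq {A : Submodule K V} {t : ℕ} (ht : t ≤ finrank K A) :
    ∃ T, T ≤ A ∧ finrank K T = t := by
  obtain ⟨f, hf⟩ := exists_linearIndependent_of_le_finrank ht
  refine ⟨(span K (Set.range f)).map A.subtype, map_subtype_le A _, ?_⟩
  rw [finrank_map_subtype_eq, finrank_span_eq_card hf, Fintype.card_fin]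

theorem exists_submodule_ge_finrank_eq [FiniteDimensional K V] {A : Submodule K V} {t : ℕ}
    (hA : finrank K A ≤ t) (ht : t ≤ finrank K V) : ∃ T, A ≤ T ∧ finrank K T = t := by
  obtain ⟨B, hAB⟩ := A.exists_isCompl
  have hAB_finrank := finrank_add_eq_of_isCompl hAB
  obtain ⟨S, hSB, hS⟩ := exists_submodule_le_finrank_eq (A := B) (t := t - finrank K A) (by omega)
  have hAS := finrank_sup_add_finrank_inf_eq A S
  rw [(hAB.disjoint.mono_right hSB).eq_bot, finrank_bot] at hAS
  exact ⟨A ⊔ S, le_sup_left, by omega⟩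

theorem finrank_map_add_finrank_inf_ker (f : V →ₗ[K] W) (A : Submodule K V)
    [FiniteDimensional K A] :
    finrank K (A.map f) + finrank K ↥(A ⊓ LinearMap.ker f) = finrank K A := by
  have h := LinearMap.finrank_range_add_finrank_ker (f.domRestrict A)
  rwa [LinearMap.range_domRestrict, LinearMap.ker_domRestrict, ← finrank_map_subtype_eq,
    map_comap_subtype] at h

theorem finrank_map_of_injective {R M N : Type*} [Semiring R] [AddCommMonoid M] [Module R M]
    [AddCommMonoid N] [Module R N] {f : M →ₗ[R] N} (hf : Function.Injective f)
    (A : Submodule R M) : finrank R (A.map f) = finrank R A :=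
  (equivMapOfInjective f hf A).finrank_eq.symm

end LinearAlgebra

section ScalarExtension

variable {K L ι : Type*} [Field K] [Field L] [Algebra K L]

/-- The `L`-subspace of `L^ι` spanned by a `K`-subspace `T` of `K^ι`, that is, the image of
`L ⊗[K] T` in `L^ι`. It turns the subspaces of `K^ι` that parametrise the subspaces of a system into
`L`-subspaces that can be intersected with a code. -/
def scalarExtension (L : Type*) [Field L] [Algebra K L] (T : Submodule K (ι → K)) :
    Submodule L (ι → L) :=
  span L ((algebraMap K L ∘ ·) '' (T : Set (ι → K)))

/-- The `K`-rational points of an `L`-subspace `A` of `L^ι`: its vectors with all coordinates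
in `K`, regarded as a subspace of `K^ι`. The columns of a matrix are `K`-independent exactly when
its kernel has no nonzero `K`-rational points. -/
def rationalPoints (K : Type*) [Field K] [Algebra K L] (A : Submodule L (ι → L)) :
    Submodule K (ι → K) :=
  (A.restrictScalars K).comap ((Algebra.linearMap K L).compLeft ι)

theorem mem_rationalPoints {A : Submodule L (ι → L)} {x : ι → K} :
    x ∈ rationalPoints K A ↔ algebraMap K L ∘ x ∈ A :=
  Iff.rfl

theorem gc_scalarExtension_rationalPoints :
    GaloisConnection (scalarExtension L : Submodule K (ι → K) → _) (rationalPoints K) :=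
  fun _ _ => span_le.trans Set.image_subset_iff

theorem scalarExtension_span (S : Set (ι → K)) :
    scalarExtension L (span K S) = span L ((algebraMap K L ∘ ·) '' S) := by
  refine le_antisymm ((gc_scalarExtension_rationalPoints _ _).2 (span_le.2 fun x hx => ?_))
    (span_mono (Set.image_mono subset_span))
  exact mem_rationalPoints.2 (subset_span (Set.mem_image_of_mem _ hx))

variable [Finite ι]

theorem scalarExtension_top : scalarExtension L (⊤ : Submodule K (ι → K)) = ⊤ := by
  classical
  have := Fintype.ofFinite ι
  rw [← (Pi.basisFun K ι).span_eq, scalarExtension_span, ← Set.range_comp,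
    ← (Pi.basisFun L ι).span_eq]
  congr 2
  ext i j
  simp [Pi.single_apply, apply_ite (algebraMap K L)]

theorem finrank_scalarExtension_le (T : Submodule K (ι → K)) :
    finrank L (scalarExtension L T) ≤ finrank K T := by
  have hT : span K (Set.range (T.subtype ∘ finBasis K T)) = T := by
    rw [Set.range_comp, ← map_span, (finBasis K T).span_eq, map_subtype_top]
  calc finrank L (scalarExtension L T)
    _ = Set.finrank L (Set.range ((algebraMap K L ∘ ·) ∘ T.subtype ∘ finBasis K T)) := by
      rw [Set.finrank, Set.range_comp (algebraMap K L ∘ ·), ← scalarExtension_span, hT]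
    _ ≤ finrank K T := (finrank_range_le_card _).trans_eq (Fintype.card_fin _)

-- The bound `finrank_scalarExtension_le` is attained by both `T` and a complement of `T`, because
-- the two extensions together span `L^ι`.
theorem finrank_scalarExtension (T : Submodule K (ι → K)) :
    finrank L (scalarExtension L T) = finrank K T := by
  have := Fintype.ofFinite ι
  obtain ⟨S, hTS⟩ := T.exists_isCompl
  have hsup : scalarExtension L T ⊔ scalarExtension L S = ⊤ := by
    rw [← gc_scalarExtension_rationalPoints.l_sup, hTS.sup_eq_top, scalarExtension_top]
  have hadd := finrank_add_eq_of_isCompl hTS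
  have hle := finrank_add_le_finrank_add_finrank (scalarExtension L T) (scalarExtension L S)
  rw [hsup, finrank_top] at hle
  rw [finrank_fintype_fun_eq_card] at hadd hle
  have hT := finrank_scalarExtension_le (L := L) T
  have hS := finrank_scalarExtension_le (L := L) S
  omega

end ScalarExtension

section DualCode

variable {K : Type} [Field K] {n : ℕ}

theorem dotProductBilin_isRefl {R ι : Type*} [CommSemiring R] [Fintype ι] :
    (dotProductBilin R R : LinearMap.BilinForm R (ι → R)).IsRefl :=
  fun x y hxy => (dotProduct_comm y x).trans hxy

theorem dotProductBilin_nondegenerate {R ι : Type*} [CommRing R] [Fintype ι] :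
    (dotProductBilin R R : LinearMap.BilinForm R (ι → R)).Nondegenerate :=
  dotProductBilin_isRefl.nondegenerate_iff_separatingLeft.2 dotProduct_eq_zero

theorem dualCode_eq_orthogonal (C : Submodule K (Fin n → K)) :
    dualCode K C = LinearMap.BilinForm.orthogonal (dotProductBilin K K) C :=
  rfl

theorem mem_dualCode_span {S : Set (Fin n → K)} {v : Fin n → K} :
    v ∈ dualCode K (span K S) ↔ ∀ c ∈ S, c ⬝ᵥ v = 0 :=
  span_le (p := LinearMap.ker ((dotProductBilin K K).flip v))

theorem dualCode_dualCode (C : Submodule K (Fin n → K)) : dualCode K (dualCode K C) = C :=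
  LinearMap.BilinForm.orthogonal_orthogonal (B := dotProductBilin K K)
    dotProductBilin_nondegenerate dotProductBilin_isRefl C

theorem dualCode_sup (C D : Submodule K (Fin n → K)) :
    dualCode K (C ⊔ D) = dualCode K C ⊓ dualCode K D := by
  ext v
  exact sup_le_iff (c := LinearMap.ker ((dotProductBilin K K).flip v))

theorem finrank_add_finrank_dualCode (C : Submodule K (Fin n → K)) :
    finrank K C + finrank K (dualCode K C) = n := by
  have hC := C.finrank_le
  rw [dualCode_eq_orthogonal, LinearMap.BilinForm.finrank_orthogonal dotProductBilin_nondegenerate]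
  rw [finrank_fin_fun] at hC ⊢
  omega

theorem finrank_inf_dualCode_add_finrank (A C : Submodule K (Fin n → K)) :
    finrank K ↥(A ⊓ dualCode K C) + finrank K C =
      finrank K A + finrank K ↥(dualCode K A ⊓ C) := by
  have hsup := finrank_sup_add_finrank_inf_eq (dualCode K A) C
  have hdual := finrank_add_finrank_dualCode (dualCode K A ⊔ C)
  rw [dualCode_sup, dualCode_dualCode] at hdual
  have hA := finrank_add_finrank_dualCode A
  omega

theorem scalarExtension_dualCode {L : Type} [Field L] [Algebra K L]
    (T : Submodule K (Fin n → K)) :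
    scalarExtension L (dualCode K T) = dualCode L (scalarExtension L T) := by
  refine eq_of_le_of_finrank_eq ((gc_scalarExtension_rationalPoints _ _).2 fun y hy => ?_) ?_
  · rw [mem_rationalPoints, scalarExtension, mem_dualCode_span]
    rintro _ ⟨x, hx, rfl⟩
    rw [← RingHom.map_dotProduct]
    exact (congrArg (algebraMap K L) (hy x hx)).trans (map_zero _)
  · have hK := finrank_add_finrank_dualCode T
    have hL := finrank_add_finrank_dualCode (scalarExtension L T)
    rw [finrank_scalarExtension] at hL ⊢
    omega

end DualCode

section ColumnSpan

variable {K L m ι : Type*} [Field K] [Field L] [Algebra K L] [Fintype ι]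

theorem mulVec_algebraMap_comp (M : Matrix m ι L) (x : ι → K) :
    M.mulVec (algebraMap K L ∘ x) = Fintype.linearCombination K M.col x := by
  ext i
  simp [Matrix.mulVec, dotProduct, Fintype.linearCombination_apply, Algebra.smul_def, mul_comm]

theorem map_mulVecLin_scalarExtension (M : Matrix m ι L) (T : Submodule K (ι → K)) :
    (scalarExtension L T).map M.mulVecLin =
      span L (T.map (Fintype.linearCombination K M.col) : Set (m → L)) := by
  rw [scalarExtension, map_span, Set.image_image, map_coe]
  simp only [Matrix.mulVecLin_apply, mulVec_algebraMap_comp]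

theorem finrank_span_map_linearCombination_add_finrank_inf_ker (M : Matrix m ι L)
    (T : Submodule K (ι → K)) :
    finrank L (span L (T.map (Fintype.linearCombination K M.col) : Set (m → L))) +
      finrank L ↥(scalarExtension L T ⊓ LinearMap.ker M.mulVecLin) = finrank K T := by
  rw [← map_mulVecLin_scalarExtension, finrank_map_add_finrank_inf_ker, finrank_scalarExtension]

theorem linearIndependent_col_iff (M : Matrix m ι L) :
    LinearIndependent K M.col ↔ rationalPoints K (LinearMap.ker M.mulVecLin) = ⊥ := by
  have hker : rationalPoints K (LinearMap.ker M.mulVecLin) =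
      LinearMap.ker (Fintype.linearCombination K M.col) := by
    ext x
    rw [mem_rationalPoints, LinearMap.mem_ker, LinearMap.mem_ker, Matrix.mulVecLin_apply,
      mulVec_algebraMap_comp]
  rw [hker, LinearMap.ker_eq_bot, linearIndependent_iff_injective_fintypeLinearCombination]

end ColumnSpan

section Systems

variable {K L : Type} [Field K] [Field L] [Algebra K L] {n k h r : ℕ}

theorem isEvasive_iff_lt_finrank_span {U : Submodule K (Fin k → L)} [FiniteDimensional K U]
    (hhk : h ≤ k) :
    IsEvasive K L U h r ↔
      ∀ S ≤ U, finrank K S = r + 1 → h < finrank L (span L (S : Set (Fin k → L))) := by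
  constructor
  · intro hU S hSU hS
    by_contra! hspan
    obtain ⟨W, hSW, hW⟩ := exists_submodule_ge_finrank_eq hspan (by rwa [finrank_fin_fun])
    have hle : S ≤ U ⊓ W.restrictScalars K := le_inf hSU fun _ hx => hSW (subset_span hx)
    have hS_le := finrank_mono hle
    have hUW_le := hU W hW
    omega
  · intro hU W hW
    by_contra! hr
    obtain ⟨S, hSUW, hS⟩ := exists_submodule_le_finrank_eq (Nat.succ_le_of_lt hr)
    have hspan : span L (S : Set (Fin k → L)) ≤ W := span_le.2 (hSUW.trans inf_le_right)
    have hspan_le := finrank_mono hspan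
    have hspan_gt := hU S (hSUW.trans inf_le_left) hS
    omega

theorem isEvasive_span_col_iff {M : Matrix (Fin k) (Fin n) L} (hM : LinearIndependent K M.col)
    (hhk : h ≤ k) :
    IsEvasive K L (span K (Set.range M.col)) h r ↔
      ∀ T : Submodule K (Fin n → K), finrank K T = r + 1 →
        finrank L ↥(scalarExtension L T ⊓ LinearMap.ker M.mulVecLin) + h ≤ r := by
  have hinj := linearIndependent_iff_injective_fintypeLinearCombination.1 hM
  rw [← Fintype.range_linearCombination K, isEvasive_iff_lt_finrank_span hhk]
  constructor
  · intro hU T hT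
    have hspan := hU _ (LinearMap.map_le_range (p := T)) (by rwa [finrank_map_of_injective hinj])
    have hnullity := finrank_span_map_linearCombination_add_finrank_inf_ker M T
    omega
  · intro hT S hSU hS
    obtain ⟨T, rfl⟩ : ∃ T, Submodule.map (Fintype.linearCombination K M.col) T = S :=
      ⟨_, map_comap_eq_of_le hSU⟩
    rw [finrank_map_of_injective hinj] at hS
    have hinf := hT T hS
    have hnullity := finrank_span_map_linearCombination_add_finrank_inf_ker M T
    omega

end Systems

section Codes

variable {K L : Type} [Field K] [Field L] [Algebra K L] {n k h r : ℕ}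
  {C : Submodule L (Fin n → L)}

theorem IsGenMatrix.ker_mulVecLin {G : Fin k → Fin n → L} (hG : IsGenMatrix L C G) :
    LinearMap.ker (Matrix.of G).mulVecLin = dualCode L C := by
  ext v
  rw [hG, mem_dualCode_span, Set.forall_mem_range]
  exact funext_iff

theorem IsNondegenerate.rationalPoints_dualCode_eq_bot (hC : IsNondegenerate K L k C) :
    rationalPoints K (dualCode L C) = ⊥ := by
  obtain ⟨G, hG, hn⟩ := hC
  rw [← hG.ker_mulVecLin, ← linearIndependent_col_iff, linearIndependent_iff_card_eq_finrank_span,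
    Fintype.card_fin]
  exact hn.symm

theorem rankWeight_algebraMap_comp_le_one (x : Fin n → K) :
    rankWeight K L (algebraMap K L ∘ x) ≤ 1 := by
  have hspan : span K (Set.range (algebraMap K L ∘ x)) ≤ K ∙ (1 : L) := by
    rw [span_le]
    rintro _ ⟨i, rfl⟩
    exact mem_span_singleton.2 ⟨x i, (Algebra.algebraMap_eq_smul_one _).symm⟩
  exact (finrank_mono hspan).trans_eq (finrank_span_singleton one_ne_zero)

theorem rationalPoints_eq_bot_of_two_le_minRankDist (hC : 2 ≤ minRankDist K L C) :
    rationalPoints K C = ⊥ := by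
  refine (Submodule.eq_bot_iff _).2 fun x hx => by_contra fun hx0 => ?_
  have hne : algebraMap K L ∘ x ≠ 0 := fun h0 =>
    hx0 (funext fun i => (map_eq_zero (algebraMap K L)).1 (congrFun h0 i))
  have hle : minRankDist K L C ≤ rankWeight K L (algebraMap K L ∘ x) :=
    Nat.sInf_le ⟨_, hx, hne, rfl⟩
  have hweight := rankWeight_algebraMap_comp_le_one (L := L) x
  omega

theorem IsAssociatedSystem.isEvasive_iff {U : Submodule K (Fin k → L)}
    (hU : IsAssociatedSystem K L C U) (hC : rationalPoints K (dualCode L C) = ⊥) (hhk : h ≤ k) :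
    IsEvasive K L U h r ↔
      ∀ T : Submodule K (Fin n → K), finrank K T = r + 1 →
        finrank L ↥(scalarExtension L T ⊓ dualCode L C) + h ≤ r := by
  obtain ⟨G, hG, rfl⟩ := hU
  rw [← hG.ker_mulVecLin] at hC ⊢
  exact isEvasive_span_col_iff ((linearIndependent_col_iff _).2 hC) hhk

theorem stmt5_general {k' h' r' : ℕ} (hhk : h ≤ k) (hhk' : h' ≤ k') (hr : r + r' + 2 = n)
    (hh : h' + (finrank L C + r + 1) = n + h) (hnd : IsNondegenerate K L k C)
    (hd : 2 ≤ minRankDist K L C) {U : Submodule K (Fin k → L)} (hU : IsAssociatedSystem K L C U)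
    {U' : Submodule K (Fin k' → L)} (hU' : IsAssociatedSystem K L (dualCode L C) U') :
    IsEvasive K L U h r ↔ IsEvasive K L U' h' r' := by
  have hC := rationalPoints_eq_bot_of_two_le_minRankDist hd
  rw [hU.isEvasive_iff hnd.rationalPoints_dualCode_eq_bot hhk,
    hU'.isEvasive_iff (by rwa [dualCode_dualCode]) hhk', dualCode_dualCode,
    (Function.Involutive.surjective dualCode_dualCode).forall]
  refine forall_congr' fun T => ?_
  have hT := finrank_add_finrank_dualCode T
  have hinf := finrank_inf_dualCode_add_finrank (scalarExtension L (dualCode K T)) C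
  rw [finrank_scalarExtension, ← scalarExtension_dualCode, dualCode_dualCode] at hinf
  omega

end Codes

/-- `U` is `(h,r)`-evasive iff the rank-metric dual system `U'` is
`(n-k-r+h-1, n-r-2)`-evasive. -/
theorem stmt5 [Fintype Fq] (n k h r : ℕ) (hk1 : 1 ≤ k) (hkn : k < n)
    (hhk : h < k) (hhr : h ≤ r) (hrub : r + k + 1 ≤ n + h)
    (C : Submodule Fqm (Fin n → Fqm)) (hdim : finrank Fqm ↥C = k)
    (hnd : IsNondegenerate Fq Fqm k C) (hd : 2 ≤ minRankDist Fq Fqm C)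
    (U : Submodule Fq (Fin k → Fqm)) (hU : IsAssociatedSystem Fq Fqm C U)
    (U' : Submodule Fq (Fin (n - k) → Fqm))
    (hU' : IsAssociatedSystem Fq Fqm (dualCode Fqm C) U') :
    IsEvasive Fq Fqm U h r ↔ IsEvasive Fq Fqm U' ((n + h) - (k + r + 1)) (n - r - 2) :=
  stmt5_general hhk.le (by omega) (by omega) (by omega) hnd hd hU hU'
end
end
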